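/- arXiv:0912.0478 — 10 statements merged into one kernel-verified Lean document; each statement's English description precedes it below -/
import Mathlib

section
/- Let A be a nonempty set, let c ∈ A, and let f : A^n → A be an operation with f(c, c, …, c) = c. If f is self-commuting, then for every i ∈ [n] the operation f_c^i : A^{n−1} → A defined by f_c^i(a_1, …, a_{n−1}) = f(a_1, …, a_{i−1}, c, a_i, …, a_{n−1}) is self-commuting. -/
/-- `f` commutes with `g`. -/
def Commutes {A : Type*} {n m : ℕ} (f : (Fin n → A) → A) (g : (Fin m → A) → A) : Prop :=
  ∀ M : Fin n → Fin m → A,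
    f (fun i => g (fun j => M i j)) = g (fun j => f (fun i => M i j))

/-- `f` is self-commuting. -/
def SelfCommuting {A : Type*} {n : ℕ} (f : (Fin n → A) → A) : Prop :=
  Commutes f f

theorem selfCommuting_substitute_constant {A : Type*} [Nonempty A] {n : ℕ}
    (f : (Fin (n + 1) → A) → A) (c : A)
    (hc : f (fun _ => c) = c) (hf : SelfCommuting f) (i : Fin (n + 1)) :
    SelfCommuting (fun a : Fin n → A => f (i.insertNth c a)) := by
  intro M
  have h := hf (i.insertNth (fun _ => c) (fun k => i.insertNth c (M k)))
  have e1 : (fun p => f (fun q => (i.insertNth (α := fun _ => Fin (n + 1) → A) (fun _ => c)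
      (fun k => i.insertNth c (M k)) : Fin (n + 1) → Fin (n + 1) → A) p q))
      = i.insertNth c (fun k => f (i.insertNth c (M k))) := by
    funext p
    refine Fin.succAboveCases i ?_ (fun k => ?_) p
    · simp [hc]
    · simp
  have e2 : (fun q => f (fun p => (i.insertNth (α := fun _ => Fin (n + 1) → A) (fun _ => c)
      (fun k => i.insertNth c (M k)) : Fin (n + 1) → Fin (n + 1) → A) p q))
      = i.insertNth c (fun j => f (i.insertNth c (fun k => M k j))) := by
    funext q
    refine Fin.succAboveCases i ?_ (fun j => ?_) q
    · rw [Fin.insertNth_apply_same]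
      refine Eq.trans (congrArg f ?_) hc
      funext p
      refine Fin.succAboveCases i ?_ (fun k => ?_) p <;> simp
    · rw [Fin.insertNth_apply_succAbove]
      refine congrArg f ?_
      funext p
      refine Fin.succAboveCases i ?_ (fun k => ?_) p <;> simp
  exact (congrArg f e1).symm.trans (h.trans (congrArg f e2))
end

section
/- Let L be a bounded distributive lattice. A function f : L^n → L is a lattice polynomial function if and only if there exist elements a_I ∈ L, one for each subset I ⊆ [n], such that for every x ∈ L^n, f(x) = ⋁_{I ⊆ [n]} (a_I ∧ ⋀_{i ∈ I} x_i). -/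
/-- Lattice polynomial functions: the smallest class of functions `L^n → L`
containing the projections and the constant functions and closed under
pointwise joins and meets. -/
inductive IsLatticePolynomial {L : Type*} [Lattice L] {n : ℕ} : ((Fin n → L) → L) → Prop
  | proj (i : Fin n) : IsLatticePolynomial (fun x => x i)
  | const (c : L) : IsLatticePolynomial (fun _ => c)
  | sup {f g : (Fin n → L) → L} : IsLatticePolynomial f → IsLatticePolynomial g →
      IsLatticePolynomial (fun x => f x ⊔ g x)
  | inf {f g : (Fin n → L) → L} : IsLatticePolynomial f → IsLatticePolynomial g →
      IsLatticePolynomial (fun x => f x ⊓ g x)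

/-- Goodstein's theorem: over a bounded distributive lattice, the lattice
polynomial functions are exactly the functions representable in
disjunctive normal form. -/
theorem isLatticePolynomial_iff_DNF {L : Type*} [DistribLattice L] [BoundedOrder L]
    {n : ℕ} (f : (Fin n → L) → L) :
    IsLatticePolynomial f ↔
      ∃ a : Finset (Fin n) → L,
        ∀ x : Fin n → L,
          f x = (Finset.univ : Finset (Finset (Fin n))).sup
            (fun I => a I ⊓ I.inf (fun i => x i)) := by
  classical
  constructor
  · intro h
    induction h with
    | proj i =>
      refine ⟨fun I => if I = {i} then ⊤ else ⊥, fun x => le_antisymm ?_ ?_⟩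
      · refine le_trans ?_ (Finset.le_sup (Finset.mem_univ {i}))
        simp
      · refine Finset.sup_le fun I _ => ?_
        by_cases hI : I = {i}
        · subst hI
          simp
        · simp [hI]
    | const c =>
      refine ⟨fun I => if I = ∅ then c else ⊥, fun x => le_antisymm ?_ ?_⟩
      · refine le_trans ?_ (Finset.le_sup (Finset.mem_univ ∅))
        simp
      · refine Finset.sup_le fun I _ => ?_
        by_cases hI : I = ∅
        · subst hI
          simp
        · simp [hI]
    | sup _ _ ihf ihg =>
      obtain ⟨a, ha⟩ := ihf
      obtain ⟨b, hb⟩ := ihg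
      refine ⟨fun I => a I ⊔ b I, fun x => ?_⟩
      simp only [ha, hb, inf_sup_right]
      exact Finset.sup_sup.symm
    | inf _ _ ihf ihg =>
      obtain ⟨a, ha⟩ := ihf
      obtain ⟨b, hb⟩ := ihg
      refine ⟨fun K => (Finset.univ.filter
        (fun p : Finset (Fin n) × Finset (Fin n) => p.1 ∪ p.2 = K)).sup
          (fun p => a p.1 ⊓ b p.2), fun x => ?_⟩
      simp only [ha, hb, Finset.sup_inf_sup]
      apply le_antisymm
      · refine Finset.sup_le fun p _ => ?_
        refine le_trans ?_ (Finset.le_sup (Finset.mem_univ (p.1 ∪ p.2)))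
        rw [inf_inf_inf_comm, ← Finset.inf_union]
        refine inf_le_inf_right _ ?_
        exact Finset.le_sup (f := fun p : Finset (Fin n) × Finset (Fin n) => a p.1 ⊓ b p.2)
          (by simp)
      · refine Finset.sup_le fun K _ => ?_
        rw [Finset.sup_inf_distrib_right]
        refine Finset.sup_le fun p hp => ?_
        have hK : p.1 ∪ p.2 = K := by simpa using hp
        rw [← hK, Finset.inf_union, inf_inf_inf_comm]
        exact Finset.le_sup (f := fun p : Finset (Fin n) × Finset (Fin n) =>
          a p.1 ⊓ p.1.inf (fun i => x i) ⊓ (b p.2 ⊓ p.2.inf (fun i => x i))) (by simp)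
  · rintro ⟨a, ha⟩
    obtain rfl : f = _ := funext ha
    have hinf : ∀ I : Finset (Fin n),
        IsLatticePolynomial (fun x : Fin n → L => I.inf (fun i => x i)) := by
      intro I
      induction I using Finset.induction_on with
      | empty => simpa using IsLatticePolynomial.const (⊤ : L)
      | insert i s _ ih =>
        simp only [Finset.inf_insert]
        exact .inf (.proj i) ih
    have hsup : ∀ S : Finset (Finset (Fin n)),
        IsLatticePolynomial
          (fun x : Fin n → L => S.sup (fun I => a I ⊓ I.inf (fun i => x i))) := by
      intro S
      induction S using Finset.induction_on with
      | empty => simpa using IsLatticePolynomial.const (⊥ : L)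
      | insert I s _ ih =>
        simp only [Finset.sup_insert]
        exact .sup (.inf (.const _) (hinf I)) ih
    exact hsup _
end

section
/- Let L be a bounded distributive lattice. Every lattice polynomial function f : L^n → L is completely determined by its restriction to {0,1}^n; that is, if f and g are lattice polynomial functions from L^n to L that agree on all tuples whose entries belong to {0, 1}, then f = g. -/
theorem IsLatticePolynomial.monotone_aux {L : Type*} [Lattice L] {n : ℕ}
    {f : (Fin n → L) → L} (hf : IsLatticePolynomial f) : Monotone f := by
  induction hf with
  | proj i => exact fun x y hxy => hxy i
  | const c => exact monotone_const
  | sup _ _ h1 h2 => exact fun x y hxy => sup_le_sup (h1 hxy) (h2 hxy)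
  | inf _ _ h1 h2 => exact fun x y hxy => inf_le_inf (h1 hxy) (h2 hxy)

/-- Shannon-type decomposition along one coordinate. -/
theorem IsLatticePolynomial.decomp_aux {L : Type*} [DistribLattice L] [BoundedOrder L] {n : ℕ}
    {f : (Fin n → L) → L} (hf : IsLatticePolynomial f) (i : Fin n) (x : Fin n → L) :
    f x = f (Function.update x i ⊥) ⊔ (x i ⊓ f (Function.update x i ⊤)) := by
  have hle : Function.update x i ⊥ ≤ Function.update x i ⊤ := by
    intro j
    by_cases hj : j = i
    · subst hj; simp
    · simp [hj]
  induction hf with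
  | proj j =>
    by_cases hj : j = i
    · subst hj; simp
    · simp [hj]
  | const c => simp
  | @sup f g _ _ h1 h2 =>
    simp only []
    rw [inf_sup_left, sup_sup_sup_comm, ← h1, ← h2]
  | @inf f g hf hg h1 h2 =>
    have m1 := hf.monotone_aux hle
    have m2 := hg.monotone_aux hle
    simp only []
    rw [h1, h2]
    generalize f (Function.update x i ⊥) = a at *
    generalize f (Function.update x i ⊤) = b at *
    generalize g (Function.update x i ⊥) = c at *
    generalize g (Function.update x i ⊤) = d at *
    generalize x i = t
    apply le_antisymm
    · rw [inf_sup_left, inf_sup_right, inf_sup_right]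
      refine sup_le (sup_le le_sup_left ?_) (sup_le ?_ ?_) <;> refine le_trans ?_ le_sup_right
      · exact le_inf (inf_le_left.trans inf_le_left)
          (inf_le_inf inf_le_right m2)
      · exact le_inf (inf_le_right.trans inf_le_left)
          (inf_le_inf m1 inf_le_right)
      · exact le_inf (inf_le_left.trans inf_le_left)
          (inf_le_inf inf_le_right inf_le_right)
    · refine sup_le (inf_le_inf le_sup_left le_sup_left) (le_inf ?_ ?_)
      · exact (inf_le_inf le_rfl inf_le_left).trans le_sup_right
      · exact (inf_le_inf le_rfl inf_le_right).trans le_sup_right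

/-- Every lattice polynomial function over a bounded distributive lattice is
completely determined by its restriction to `{0,1}^n`. -/
theorem latticePolynomial_determined_by_boolean_tuples {L : Type*} [DistribLattice L]
    [BoundedOrder L] {n : ℕ} (f g : (Fin n → L) → L)
    (hf : IsLatticePolynomial f) (hg : IsLatticePolynomial g)
    (h : ∀ x : Fin n → L, (∀ i, x i = ⊥ ∨ x i = ⊤) → f x = g x) :
    f = g := by
  have key : ∀ S : Finset (Fin n), ∀ x : Fin n → L,
      (∀ i, i ∉ S → x i = ⊥ ∨ x i = ⊤) → f x = g x := by
    intro S
    induction S using Finset.induction_on with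
    | empty => exact fun x hx => h x fun i => hx i (Finset.notMem_empty i)
    | insert i S _ ih =>
      intro x hx
      have aux : ∀ c : L, c = ⊥ ∨ c = ⊤ →
          f (Function.update x i c) = g (Function.update x i c) := by
        intro c hc
        apply ih
        intro j hj
        by_cases hji : j = i
        · subst hji; simpa using hc
        · simpa [hji] using hx j (by simp [hji, hj])
      rw [hf.decomp_aux i x, hg.decomp_aux i x, aux ⊥ (Or.inl rfl), aux ⊤ (Or.inr rfl)]
  funext x
  exact key Finset.univ x fun i hi => absurd (Finset.mem_univ i) hi
end

section
/- Let L be a bounded distributive lattice and let f : L^n → L be a lattice polynomial function. Then for each j ∈ [n], the variable x_j is essential in f if and only if there exists a set J ⊆ [n] \ {j} such that f(e_J) < f(e_{J ∪ {j}}). -/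
/-- The variable `x_j` is essential in `f` if there are two tuples differing
only in their `j`-th component on which `f` takes different values. -/
def EssentialVar {L : Type*} {n : ℕ} (f : (Fin n → L) → L) (j : Fin n) : Prop :=
  ∃ x y : Fin n → L, (∀ i, i ≠ j → x i = y i) ∧ f x ≠ f y

theorem ilp_mono {L : Type*} [DistribLattice L] {n : ℕ}
    {f : (Fin n → L) → L} (hf : IsLatticePolynomial f) : Monotone f := by
  induction hf with
  | proj i => exact fun x y h => h i
  | const c => exact fun x y h => le_rfl
  | sup _ _ h1 h2 => exact fun x y h => sup_le_sup (h1 h) (h2 h)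
  | inf _ _ h1 h2 => exact fun x y h => inf_le_inf (h1 h) (h2 h)

theorem lat_aux {L : Type*} [DistribLattice L] (a b c d x : L) (h1 : a ≤ b) (h2 : c ≤ d) :
    (a ⊔ (x ⊓ b)) ⊓ (c ⊔ (x ⊓ d)) = (a ⊓ c) ⊔ (x ⊓ (b ⊓ d)) := by
  apply le_antisymm
  · rw [inf_sup_left, inf_sup_right, inf_sup_right]
    refine sup_le (sup_le le_sup_left ?_) (sup_le ?_ ?_) <;> refine le_trans ?_ le_sup_right
    · exact le_inf (inf_le_left.trans inf_le_left) (inf_le_inf inf_le_right h2)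
    · exact le_inf (inf_le_right.trans inf_le_left) (inf_le_inf h1 inf_le_right)
    · exact le_inf (inf_le_left.trans inf_le_left) (inf_le_inf inf_le_right inf_le_right)
  · refine sup_le (inf_le_inf le_sup_left le_sup_left) (le_inf ?_ ?_)
    · exact le_trans (inf_le_inf le_rfl inf_le_left) le_sup_right
    · exact le_trans (inf_le_inf le_rfl inf_le_right) le_sup_right

theorem ilp_decomp {L : Type*} [DistribLattice L] [BoundedOrder L] {n : ℕ}
    {f : (Fin n → L) → L} (hf : IsLatticePolynomial f) (k : Fin n) (x : Fin n → L) :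
    f x = f (Function.update x k ⊥) ⊔ (x k ⊓ f (Function.update x k ⊤)) := by
  have hle : Function.update x k ⊥ ≤ Function.update x k ⊤ :=
    update_le_update_iff.2 ⟨bot_le, fun _ _ => le_rfl⟩
  induction hf with
  | proj i =>
    by_cases h : i = k
    · subst h; simp
    · simp [h]
  | const c => simp
  | sup _ _ h1 h2 =>
    beta_reduce
    rw [inf_sup_left, sup_sup_sup_comm, ← h1, ← h2]
  | inf hf hg h1 h2 =>
    beta_reduce
    rw [← lat_aux _ _ _ _ _ (ilp_mono hf hle) (ilp_mono hg hle), ← h1, ← h2]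

theorem ilp_key {L : Type*} [DistribLattice L] [BoundedOrder L] {n : ℕ}
    {f : (Fin n → L) → L} (hf : IsLatticePolynomial f) (j : Fin n)
    (H : ∀ J : Finset (Fin n), j ∉ J → f (fun i => if i ∈ J then ⊤ else (⊥ : L)) =
          f (fun i => if i ∈ insert j J then ⊤ else ⊥)) (S : Finset (Fin n)) :
    ∀ x : Fin n → L, (∀ i, i ∉ S → x i = ⊥ ∨ x i = ⊤) →
      f (Function.update x j ⊥) = f (Function.update x j ⊤) := by
  classical
  induction S using Finset.induction_on with
  | empty =>
    intro x hx
    have h := H (Finset.univ.filter fun i => i ≠ j ∧ x i = ⊤) (by simp)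
    convert h using 2
    · ext i
      by_cases hi : i = j
      · subst hi; simp
      · rcases hx i (by simp) with h | h <;> simp [hi, h]
    · ext i
      by_cases hi : i = j
      · subst hi; simp
      · rcases hx i (by simp) with h | h <;> simp [hi, h]
  | insert k S _ ih =>
    intro x hx
    have hb : ∀ b : L, (b = ⊥ ∨ b = ⊤) → f (Function.update (Function.update x k b) j ⊥) =
        f (Function.update (Function.update x k b) j ⊤) := by
      intro b hb
      apply ih
      intro i hi
      by_cases h : i = k
      · subst h; simpa using hb
      · simpa [h] using hx i (by simp [h, hi])
    by_cases hk : k = j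
    · subst hk
      simpa using hb ⊥ (Or.inl rfl)
    · rw [ilp_decomp hf k (Function.update x j ⊥), ilp_decomp hf k (Function.update x j ⊤)]
      rw [Function.update_comm (Ne.symm hk), Function.update_comm (Ne.symm hk),
        Function.update_comm (Ne.symm hk), Function.update_comm (Ne.symm hk),
        hb ⊥ (Or.inl rfl), hb ⊤ (Or.inr rfl)]
      simp [hk]

/-- For a lattice polynomial function `f` over a bounded distributive lattice,
`x_j` is essential in `f` iff there exists `J ⊆ [n] \ {j}` with
`f(e_J) < f(e_{J ∪ {j}})`. -/
theorem essentialVar_iff {L : Type*} [DistribLattice L] [BoundedOrder L] {n : ℕ}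
    (f : (Fin n → L) → L) (hf : IsLatticePolynomial f) (j : Fin n) :
    EssentialVar f j ↔
      ∃ J : Finset (Fin n), j ∉ J ∧
        f (fun i => if i ∈ J then ⊤ else (⊥ : L)) <
          f (fun i => if i ∈ insert j J then ⊤ else ⊥) := by
  constructor
  · rintro ⟨x, y, hxy, hne⟩
    by_contra hcon
    have H : ∀ J : Finset (Fin n), j ∉ J → f (fun i => if i ∈ J then ⊤ else (⊥ : L)) =
          f (fun i => if i ∈ insert j J then ⊤ else ⊥) := by
      intro J hJ
      by_contra h
      refine hcon ⟨J, hJ, lt_of_le_of_ne (ilp_mono hf fun i => ?_) h⟩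
      by_cases hi : i ∈ J
      · simp [hi]
      · simp [hi]
    have hz : ∀ z, f z = f (Function.update z j ⊥) := by
      intro z
      have h := ilp_decomp hf j z
      rw [← ilp_key hf j H Finset.univ z (by simp)] at h
      rw [h]
      exact sup_eq_left.2 inf_le_right
    apply hne
    rw [hz x, hz y]
    congr 1
    ext i
    by_cases hi : i = j
    · subst hi; simp
    · simp [hi, hxy i hi]
  · rintro ⟨J, hJ, hlt⟩
    refine ⟨_, _, fun i hi => ?_, hlt.ne⟩
    simp [hi]
end

section
/- Let L be a bounded chain (a bounded linearly ordered lattice). A lattice polynomial function f : L^n → L is self-commuting if and only if f is a weighted disjunction or f has chain form. -/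
/-- `f` is a weighted disjunction:
`f(x) = a_∅ ∨ ⋁_{i ∈ [n]} (a_i ∧ x_i)` for some coefficients. -/
def IsWeightedDisjunction {L : Type*} [Lattice L] {n : ℕ} (f : (Fin n → L) → L) : Prop :=
  ∃ (a₀ : L) (a : Fin n → L),
    ∀ x : Fin n → L,
      f x = Finset.univ.fold (fun u v : L => u ⊔ v) a₀ (fun i => a i ⊓ x i)

/-- `f` has chain form:
`f(x) = a_∅ ∨ ⋁_{i ∈ [n]} (a_i ∧ x_i) ∨ ⋁_{1 ≤ ℓ ≤ r} (a_{S_ℓ} ∧ ⋀_{i ∈ S_ℓ} x_i)`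
for a chain of subsets `S_1 ⊆ ⋯ ⊆ S_r ⊆ [n]` with `r ≥ 1` and `|S_1| ≥ 2`,
where the coefficients satisfy `a_I ≤ a_J` whenever `I ⊆ J` among the indexed
sets, and for every `i ∉ S_1` there is `j ∈ S_1` with `a_i ≤ a_j`. -/
def HasChainForm {L : Type*} [Lattice L] {n : ℕ} (f : (Fin n → L) → L) : Prop :=
  ∃ (r : ℕ) (hr : 0 < r) (S : Fin r → Finset (Fin n)) (a₀ : L) (a : Fin n → L)
    (b : Fin r → L) (hne : ∀ ℓ : Fin r, (S ℓ).Nonempty),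
    (∀ ℓ m : Fin r, ℓ ≤ m → S ℓ ⊆ S m) ∧
    2 ≤ (S ⟨0, hr⟩).card ∧
    (∀ i, a₀ ≤ a i) ∧
    (∀ ℓ, a₀ ≤ b ℓ) ∧
    (∀ i ℓ, i ∈ S ℓ → a i ≤ b ℓ) ∧
    (∀ ℓ m, S ℓ ⊆ S m → b ℓ ≤ b m) ∧
    (∀ i, i ∉ S ⟨0, hr⟩ → ∃ j ∈ S ⟨0, hr⟩, a i ≤ a j) ∧
    ∀ x : Fin n → L,
      f x = Finset.univ.fold (fun u v : L => u ⊔ v)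
        (Finset.univ.fold (fun u v : L => u ⊔ v) a₀ (fun i => a i ⊓ x i))
        (fun ℓ : Fin r => b ℓ ⊓ (S ℓ).inf' (hne ℓ) (fun i => x i))

section Helpers

variable {L : Type*} [LinearOrder L] [BoundedOrder L] {n : ℕ}

theorem le_fold_sup_iff {ι : Type*} (s : Finset ι) (b t : L) (g : ι → L) :
    t ≤ s.fold (fun u v : L => u ⊔ v) b g ↔ t ≤ b ∨ ∃ i ∈ s, t ≤ g i :=
  Finset.le_fold_max (s := s) (f := g) (b := b) t

/-- indicator vector -/
def indVec (L : Type*) [LinearOrder L] [BoundedOrder L] {n : ℕ} (S : Finset (Fin n)) :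
    Fin n → L := fun i => if i ∈ S then ⊤ else ⊥

theorem threshold {f : (Fin n → L) → L} (hf : IsLatticePolynomial f) (t : L) (x : Fin n → L) :
    t ≤ f x ↔ t ≤ f (indVec L (Finset.univ.filter fun i => t ≤ x i)) := by
  induction hf with
  | proj i =>
    by_cases h : t ≤ x i
    · simp [indVec, h]
    · have : ¬ t ≤ ⊥ := fun h' => h (h'.trans bot_le)
      simp only [indVec, Finset.mem_filter, Finset.mem_univ, true_and, h, if_false, this]
  | const c => rfl
  | sup _ _ h1 h2 => simp only [le_sup_iff, h1, h2]
  | inf _ _ h1 h2 => simp only [le_inf_iff, h1, h2]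

theorem polyMono {f : (Fin n → L) → L} (hf : IsLatticePolynomial f) : Monotone f := by
  induction hf with
  | proj i => exact fun x y h => h i
  | const c => exact fun x y h => le_rfl
  | sup _ _ h1 h2 => exact fun x y h => sup_le_sup (h1 h) (h2 h)
  | inf _ _ h1 h2 => exact fun x y h => inf_le_inf (h1 h) (h2 h)

theorem indVec_mono {S T : Finset (Fin n)} (h : S ⊆ T) : indVec L S ≤ indVec L T := by
  intro i
  by_cases h1 : i ∈ S
  · simp [indVec, h1, h h1]
  · simp [indVec, h1]

theorem selfComm_of_levels {f : (Fin n → L) → L}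
    (h : ∀ t : L, (∃ T : Finset (Fin n), ∀ x, t ≤ f x ↔ ∃ i ∈ T, t ≤ x i) ∨
      (∃ T : Finset (Fin n), ∀ x, t ≤ f x ↔ ∀ i ∈ T, t ≤ x i)) : SelfCommuting f := by
  intro M
  apply eq_of_forall_le_iff
  intro t
  rcases h t with ⟨T, hT⟩ | ⟨T, hT⟩
  · simp only [hT]
    constructor
    · rintro ⟨i, hi, j, hj, h⟩; exact ⟨j, hj, i, hi, h⟩
    · rintro ⟨i, hi, j, hj, h⟩; exact ⟨j, hj, i, hi, h⟩
  · simp only [hT]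
    exact ⟨fun h i hi j hj => h j hj i hi, fun h i hi j hj => h j hj i hi⟩

theorem wd_comm {f : (Fin n → L) → L} (h : IsWeightedDisjunction f) : SelfCommuting f := by
  obtain ⟨a₀, a, h⟩ := h
  apply selfComm_of_levels
  intro t
  by_cases h0 : t ≤ a₀
  · exact Or.inr ⟨∅, fun x => by simp [h, le_fold_sup_iff, h0]⟩
  · exact Or.inl ⟨Finset.univ.filter fun i => t ≤ a i, fun x => by
      simp [h, le_fold_sup_iff, h0]⟩

theorem cf_comm {f : (Fin n → L) → L} (h : HasChainForm f) : SelfCommuting f := by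
  obtain ⟨r, hr, S, a₀, a, b, hne, hS, hc, ha, hb, hab, hbb, hj, h⟩ := h
  apply selfComm_of_levels
  intro t
  have key : ∀ x, t ≤ f x ↔ (t ≤ a₀ ∨ ∃ i, t ≤ a i ∧ t ≤ x i) ∨
      ∃ l, t ≤ b l ∧ ∀ i ∈ S l, t ≤ x i := by
    intro x; simp [h, le_fold_sup_iff]
  by_cases h0 : t ≤ a₀
  · exact Or.inr ⟨∅, fun x => by simp [key, h0]⟩
  by_cases h1 : ∃ i, t ≤ a i
  · refine Or.inl ⟨Finset.univ.filter fun i => t ≤ a i, fun x => ?_⟩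
    rw [key]
    simp only [h0, false_or, Finset.mem_filter, Finset.mem_univ, true_and]
    refine ⟨?_, Or.inl⟩
    rintro (h | ⟨l, hl, hx⟩)
    · exact h
    · obtain ⟨i, hi⟩ := h1
      have : ∃ j ∈ S ⟨0, hr⟩, t ≤ a j := by
        by_cases hi0 : i ∈ S ⟨0, hr⟩
        · exact ⟨i, hi0, hi⟩
        · obtain ⟨j, hj0, hj1⟩ := hj i hi0
          exact ⟨j, hj0, hi.trans hj1⟩
      obtain ⟨j, hj0, hj1⟩ := this
      exact ⟨j, hj1, hx j (hS ⟨0, hr⟩ l (Nat.zero_le _) hj0)⟩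
  · push Not at h1
    have h1' : ∀ i, ¬ t ≤ a i := fun i => not_le.2 (h1 i)
    by_cases h2 : ∃ l, t ≤ b l
    · have hn : (Finset.univ.filter fun l => t ≤ b l).Nonempty := by
        obtain ⟨l, hl⟩ := h2
        exact ⟨l, by simpa using hl⟩
      obtain ⟨m, hm, hmin⟩ := Finset.exists_min_image _ id hn
      simp only [Finset.mem_filter, Finset.mem_univ, true_and, id] at hm hmin
      refine Or.inr ⟨S m, fun x => ?_⟩
      rw [key]
      simp only [h0, h1', false_and, exists_false, false_or]
      constructor
      · rintro ⟨l, hl, hx⟩ i hi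
        exact hx i (hS m l (hmin l hl) hi)
      · exact fun hx => ⟨m, hm, hx⟩
    · push Not at h2
      have h2' : ∀ i, ¬ t ≤ b i := fun i => not_le.2 (h2 i)
      exact Or.inl ⟨∅, fun x => by simp [key, h0, h1', h2']⟩

theorem minterm_subset {f : (Fin n → L) → L} (hf : IsLatticePolynomial f)
    (hc : SelfCommuting f) (t : L) (S R : Finset (Fin n)) (hS2 : 2 ≤ S.card)
    (hS : t ≤ f (indVec L S)) (hmin : ∀ Q, Q ⊂ S → f (indVec L Q) < t)
    (hR : t ≤ f (indVec L R)) : S ⊆ R := by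
  obtain ⟨i0, hi0⟩ : S.Nonempty := Finset.card_pos.1 (by omega)
  by_contra hSR
  let M : Fin n → Fin n → L := fun i => if i = i0 then indVec L R else
    if i ∈ S then indVec L S else fun _ => ⊥
  have h1 : t ≤ f (fun i => f (fun j => M i j)) := by
    rw [threshold hf]
    refine hS.trans (polyMono hf (indVec_mono ?_))
    intro i hi
    simp only [Finset.mem_filter, Finset.mem_univ, true_and]
    by_cases h : i = i0
    · simpa [M, h] using hR
    · simpa [M, h, hi] using hS
  rw [hc M, threshold hf] at h1
  refine absurd h1 (not_le.2 ?_)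
  refine lt_of_le_of_lt (polyMono hf (indVec_mono ?_)) (hmin (S ∩ R) ?_)
  · intro j hj
    simp only [Finset.mem_filter, Finset.mem_univ, true_and] at hj
    by_contra hjSR
    refine absurd hj (not_le.2 ?_)
    by_cases hjS : j ∈ S
    · have hjR : j ∉ R := fun h => hjSR (Finset.mem_inter.2 ⟨hjS, h⟩)
      refine lt_of_le_of_lt (polyMono hf ?_) (hmin (S.erase i0) (Finset.erase_ssubset hi0))
      intro i
      by_cases h : i = i0
      · simp [M, h, indVec, hjR]
      · by_cases h' : i ∈ S <;> simp [M, h, h', indVec]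
    · refine lt_of_le_of_lt (polyMono hf ?_) (hmin {i0} ?_)
      · intro i
        by_cases h : i = i0
        · simp [h, indVec]
        · by_cases h' : i ∈ S <;> simp [M, h, h', indVec, hjS]
      · refine Finset.ssubset_iff_subset_ne.2 ⟨by simpa using hi0, ?_⟩
        rintro rfl
        simp at hS2
  · refine Finset.ssubset_iff_subset_ne.2 ⟨Finset.inter_subset_left, ?_⟩
    intro h
    exact hSR (Finset.inter_eq_left.1 h)

theorem exists_minterm (f : (Fin n → L) → L) (t : L) (S : Finset (Fin n))
    (hS : t ≤ f (indVec L S)) :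
    ∃ R, R ⊆ S ∧ t ≤ f (indVec L R) ∧ ∀ Q, Q ⊂ R → f (indVec L Q) < t := by
  induction S using Finset.strongInduction with
  | H S ih =>
    by_cases h : ∀ Q, Q ⊂ S → f (indVec L Q) < t
    · exact ⟨S, subset_rfl, hS, h⟩
    · push Not at h
      obtain ⟨Q, hQ, hQt⟩ := h
      obtain ⟨R, hR, h⟩ := ih Q hQ hQt
      exact ⟨R, hR.trans hQ.1, h⟩

theorem forward {f : (Fin n → L) → L} (hf : IsLatticePolynomial f)
    (hc : SelfCommuting f) : IsWeightedDisjunction f ∨ HasChainForm f := by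
  classical
  let A : Finset (Fin n) → L := fun S => f (indVec L S)
  have hA : ∀ {S T}, S ⊆ T → A S ≤ A T := fun h => polyMono hf (indVec_mono h)
  let C : Finset (Finset (Fin n)) :=
    Finset.univ.filter fun S => 2 ≤ S.card ∧ ∀ Q, Q ⊂ S → A Q < A S
  have hC : ∀ {S}, S ∈ C ↔ 2 ≤ S.card ∧ ∀ Q, Q ⊂ S → A Q < A S := by simp [C]
  have rep : ∀ t x, t ≤ f x ↔ (t ≤ A ∅ ∨ ∃ i, t ≤ A {i} ∧ t ≤ x i) ∨
      ∃ S ∈ C, t ≤ A S ∧ ∀ i ∈ S, t ≤ x i := by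
    intro t x
    have up : ∀ S, t ≤ A S → (∀ i ∈ S, t ≤ x i) → t ≤ f x := by
      intro S h1 h2
      rw [threshold hf]
      exact h1.trans (hA fun i hi => by simpa using h2 i hi)
    constructor
    · intro h
      rw [threshold hf] at h
      obtain ⟨R, hR, hRt, hmin⟩ := exists_minterm f t _ h
      have hR' : ∀ i ∈ R, t ≤ x i := fun i hi => by simpa using hR hi
      by_cases h0 : R.card = 0
      · rw [Finset.card_eq_zero] at h0
        subst h0
        exact Or.inl (Or.inl hRt)
      by_cases h1 : R.card = 1
      · obtain ⟨i, rfl⟩ := Finset.card_eq_one.1 h1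
        exact Or.inl (Or.inr ⟨i, hRt, hR' i (by simp)⟩)
      · exact Or.inr ⟨R, hC.2 ⟨by omega, fun Q hQ => (hmin Q hQ).trans_le hRt⟩, hRt, hR'⟩
    · rintro ((h | ⟨i, h, hx⟩) | ⟨S, _, h, hx⟩)
      · exact up _ h (by simp)
      · exact up _ h (by simpa using hx)
      · exact up _ h hx
  have chain : ∀ S ∈ C, ∀ R ∈ C, S ⊆ R ∨ R ⊆ S := by
    intro S hS R hR
    rw [hC] at hS hR
    rcases le_total (A S) (A R) with h | h
    · exact Or.inl (minterm_subset hf hc _ S R hS.1 le_rfl hS.2 h)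
    · exact Or.inr (minterm_subset hf hc _ R S hR.1 le_rfl hR.2 h)
  by_cases hCe : C.Nonempty
  · right
    obtain ⟨S1, hS1, hS1min⟩ := Finset.exists_min_image C Finset.card hCe
    have cardle : ∀ S ∈ C, ∀ R ∈ C, S.card ≤ R.card → S ⊆ R := by
      intro S hS R hR h
      rcases chain S hS R hR with h' | h'
      · exact h'
      · exact (Finset.eq_of_subset_of_card_le h' h).symm.subset
    let S : Fin (n+1) → Finset (Fin n) := fun l =>
      S1 ⊔ (C.filter fun R => R.card ≤ l.val).sup id
    have unionC : ∀ X ∈ C, ∀ Y ∈ C, X ⊔ Y ∈ C := by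
      intro X hX Y hY
      rcases chain X hX Y hY with h | h
      · rwa [sup_eq_right.2 h]
      · rwa [sup_eq_left.2 h]
    have hSC : ∀ l, S l ∈ C := by
      intro l
      refine Finset.sup_induction (p := fun X => S1 ⊔ X ∈ C) ?_ ?_ ?_
      · simpa using hS1
      · intro X hX Y hY
        rw [sup_sup_distrib_left]
        exact unionC _ hX _ hY
      · intro X hX
        exact unionC _ hS1 _ (Finset.mem_filter.1 hX).1
    have hcard : ∀ l, 2 ≤ (S l).card := fun l => (hC.1 (hSC l)).1
    have hsurj : ∀ R ∈ C, ∃ l, S l = R := by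
      intro R hR
      refine ⟨⟨R.card, Nat.lt_succ_of_le (by simpa using Finset.card_le_univ R)⟩, ?_⟩
      apply le_antisymm
      · refine sup_le (cardle _ hS1 _ hR (hS1min R hR)) (Finset.sup_le ?_)
        intro X hX
        obtain ⟨hX1, hX2⟩ := Finset.mem_filter.1 hX
        exact cardle _ hX1 _ hR hX2
      · refine le_trans ?_ le_sup_right
        exact Finset.le_sup (f := id) (Finset.mem_filter.2 ⟨hR, le_rfl⟩)
    refine ⟨n+1, Nat.succ_pos n, S, A ∅, fun i => A {i}, fun l => A (S l),
      fun l => Finset.card_pos.1 (by have := hcard l; omega), ?_, hcard _,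
      fun i => hA (by simp), fun l => hA (by simp), fun i l h => hA (by simpa using h),
      fun l m h => hA h, ?_, ?_⟩
    · intro l m hlm
      refine sup_le_sup le_rfl (Finset.sup_mono ?_)
      intro X hX
      obtain ⟨hX1, hX2⟩ := Finset.mem_filter.1 hX
      exact Finset.mem_filter.2 ⟨hX1, hX2.trans hlm⟩
    · generalize (⟨0, Nat.succ_pos n⟩ : Fin (n+1)) = z
      intro i hi
      have h0 := hC.1 (hSC z)
      have nosub : ∀ R : Finset (Fin n), 2 ≤ R.card → ¬ R ⊆ {i} := by
        intro R h h'
        have := Finset.card_le_card h'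
        simp at this
        omega
      have hlt : A {i} ≤ A (S z) := by
        rcases le_total (A {i}) (A (S z)) with h | h
        · exact h
        · exact absurd (minterm_subset hf hc _ _ _ h0.1 le_rfl h0.2 h) (nosub _ h0.1)
      obtain ⟨R, hR, hRt, hmin⟩ := exists_minterm f (A {i}) (S z) hlt
      by_cases hR2 : 2 ≤ R.card
      · exact absurd (minterm_subset hf hc _ _ _ hR2 hRt hmin le_rfl) (nosub _ hR2)
      by_cases hR1 : R.card = 1
      · obtain ⟨j, rfl⟩ := Finset.card_eq_one.1 hR1
        exact ⟨j, by simpa using hR, hRt⟩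
      · have hR0 : R = ∅ := Finset.card_eq_zero.1 (by omega)
        subst hR0
        obtain ⟨j, hj⟩ : (S z).Nonempty := Finset.card_pos.1 (by omega)
        exact ⟨j, hj, le_trans hRt (hA (Finset.empty_subset _))⟩
    · intro x
      apply eq_of_forall_le_iff
      intro t
      rw [rep, le_fold_sup_iff, le_fold_sup_iff]
      simp only [Finset.mem_univ, true_and, le_inf_iff, Finset.le_inf'_iff]
      refine or_congr Iff.rfl ⟨?_, ?_⟩
      · rintro ⟨R, hR, h⟩
        obtain ⟨l, rfl⟩ := hsurj R hR
        exact ⟨l, h⟩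
      · rintro ⟨l, h⟩
        exact ⟨S l, hSC l, h⟩
  · left
    rw [Finset.not_nonempty_iff_eq_empty] at hCe
    refine ⟨A ∅, fun i => A {i}, fun x => ?_⟩
    apply eq_of_forall_le_iff
    intro t
    rw [rep, le_fold_sup_iff, hCe]
    simp

end Helpers

/-- Main theorem: over a bounded chain, a lattice polynomial function is
self-commuting if and only if it is a weighted disjunction or has chain form. -/
theorem selfCommuting_iff_weightedDisjunction_or_chainForm
    {L : Type*} [LinearOrder L] [BoundedOrder L] {n : ℕ}
    (f : (Fin n → L) → L) (hf : IsLatticePolynomial f) :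
    SelfCommuting f ↔ IsWeightedDisjunction f ∨ HasChainForm f := by
  exact ⟨forward hf, fun h => h.elim wd_comm cf_comm⟩
end

section
/- Let L be a distributive lattice and let f : L^n → L be a weighted disjunction, i.e., f(x_1,…,x_n) = a_∅ ∨ ⋁_{i ∈ [n]} (a_i ∧ x_i) for some elements a_∅, a_i (i ∈ [n]) of L. Then f is self-commuting. -/
theorem fold_sup_le_iff_aux {L ι : Type*} [DistribLattice L] (s : Finset ι) (b c : L)
    (g : ι → L) :
    s.fold (fun u v : L => u ⊔ v) b g ≤ c ↔ b ≤ c ∧ ∀ i ∈ s, g i ≤ c := by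
  classical
  induction s using Finset.induction_on with
  | empty => simp
  | insert i s hi ih =>
    rw [Finset.fold_insert hi, sup_le_iff, ih, Finset.forall_mem_insert]
    tauto

theorem inf_fold_sup_le_iff_aux {L ι : Type*} [DistribLattice L] (s : Finset ι) (a b c : L)
    (g : ι → L) :
    a ⊓ s.fold (fun u v : L => u ⊔ v) b g ≤ c ↔ a ⊓ b ≤ c ∧ ∀ i ∈ s, a ⊓ g i ≤ c := by
  classical
  induction s using Finset.induction_on with
  | empty => simp
  | insert i s hi ih =>
    rw [Finset.fold_insert hi, inf_sup_left, sup_le_iff, ih, Finset.forall_mem_insert]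
    tauto

/-- Over a distributive lattice, every weighted disjunction is self-commuting. -/
theorem selfCommuting_of_weightedDisjunction {L : Type*} [DistribLattice L] {n : ℕ}
    (f : (Fin n → L) → L) (hf : IsWeightedDisjunction f) :
    SelfCommuting f := by
  obtain ⟨a₀, a, h⟩ := hf
  intro M
  refine eq_of_forall_ge_iff fun c => ?_
  simp only [h, fold_sup_le_iff_aux, inf_fold_sup_le_iff_aux, Finset.mem_univ, true_imp_iff]
  refine and_congr_right fun _ => ⟨fun H i => ⟨(H i).1, fun j => ?_⟩,
    fun H i => ⟨(H i).1, fun j => ?_⟩⟩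
  · rw [inf_left_comm]
    exact (H j).2 i
  · rw [inf_left_comm]
    exact (H j).2 i
end

section
/- Let L be a distributive lattice and let f : L^n → L have chain form, i.e., f(x_1,…,x_n) = a_∅ ∨ ⋁_{i ∈ [n]} (a_i ∧ x_i) ∨ ⋁_{1 ≤ ℓ ≤ r} (a_{S_ℓ} ∧ ⋀_{i ∈ S_ℓ} x_i) for a chain of subsets S_1 ⊆ S_2 ⊆ ⋯ ⊆ S_r ⊆ [n] with r ≥ 1 and |S_1| ≥ 2, and elements a_∅, a_i (i ∈ [n]), a_{S_ℓ} (1 ≤ ℓ ≤ r) of L such that a_I ≤ a_J whenever I ⊆ J (among the indexed sets), and for all i ∉ S_1 there exists j ∈ S_1 with a_i ≤ a_j. Then f is self-commuting. -/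
theorem pred_fold_sup {L : Type*} [DistribLattice L] {ι : Type*} (P : L → Prop)
    (hsup : ∀ x y, P (x ⊔ y) ↔ P x ∨ P y) (s : Finset ι) (c : L) (g : ι → L) :
    P (s.fold (fun u v : L => u ⊔ v) c g) ↔ P c ∨ ∃ i ∈ s, P (g i) := by
  classical
  induction s using Finset.induction_on with
  | empty => simp
  | insert i s hi ih =>
    rw [Finset.fold_insert hi, hsup, ih]
    simp only [Finset.mem_insert, exists_eq_or_imp]
    tauto

theorem pred_inf' {L : Type*} [DistribLattice L] {ι : Type*} (P : L → Prop)
    (hinf : ∀ x y, P (x ⊓ y) ↔ P x ∧ P y) (s : Finset ι) (hs : s.Nonempty) (g : ι → L) :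
    P (s.inf' hs g) ↔ ∀ i ∈ s, P (g i) := by
  classical
  induction hs using Finset.Nonempty.cons_induction with
  | singleton i => simp
  | cons i s hi hs ih =>
    rw [Finset.inf'_cons hs, hinf, ih]
    simp

theorem le_of_preds {L : Type*} [DistribLattice L] (x y : L)
    (h : ∀ P : L → Prop, (∀ x y, P (x ⊔ y) ↔ P x ∨ P y) → (∀ x y, P (x ⊓ y) ↔ P x ∧ P y) →
      P x → P y) : x ≤ y := by
  by_contra hxy
  have hd : Disjoint ((Order.PFilter.principal x : Order.PFilter L) : Set L)
      ((Order.Ideal.principal y : Order.Ideal L) : Set L) := by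
    rw [Set.disjoint_left]
    intro z hz hz'
    have h1 : x ≤ z := by simpa using hz
    have h2 : z ≤ y := by simpa using hz'
    exact hxy (h1.trans h2)
  obtain ⟨J, hJ, hIJ, hFJ⟩ := DistribLattice.prime_ideal_of_disjoint_filter_ideal hd
  have hy : y ∈ J := hIJ (by simp)
  have hx : x ∉ J := fun hx => (Set.disjoint_left.1 hFJ) (show x ∈ _ by simp) hx
  refine h (fun z => z ∉ J) ?_ ?_ hx hy
  · intro u v
    rw [Order.Ideal.sup_mem_iff]; tauto
  · intro u v
    have h1 : u ⊓ v ∈ J → u ∈ J ∨ v ∈ J := hJ.mem_or_mem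
    have h2 : u ∈ J → u ⊓ v ∈ J := J.lower inf_le_left
    have h3 : v ∈ J → u ⊓ v ∈ J := J.lower inf_le_right
    tauto

/-- One direction of the two-valued case. -/
theorem bool_chain {n r : ℕ} (S : Fin r → Finset (Fin n)) (A0 : Prop) (A : Fin n → Prop)
    (B : Fin r → Prop) (z : Fin r) (hz : ∀ l, z ≤ l)
    (hch : ∀ l m : Fin r, l ≤ m → S l ⊆ S m)
    (hAB : ∀ i l, i ∈ S l → A i → B l)
    (hA : ∀ i, A i → ∃ j ∈ S z, A j)
    (F : (Fin n → Prop) → Prop)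
    (hF : ∀ x, F x ↔ (A0 ∨ ∃ i, A i ∧ x i) ∨ ∃ l, B l ∧ ∀ i ∈ S l, x i)
    (M : Fin n → Fin n → Prop) (h : F (fun i => F (fun j => M i j))) :
    F (fun j => F (fun i => M i j)) := by
  by_cases h0 : A0
  · exact (hF _).2 (Or.inl (Or.inl h0))
  by_cases hex : ∃ i, A i
  · obtain ⟨i, hi⟩ := hex
    obtain ⟨k, hk, hAk⟩ := hA i hi
    have key : ∀ x, F x → ∃ i, A i ∧ x i := by
      intro x hx
      rcases (hF x).1 hx with (h1 | h1) | ⟨l, -, hl⟩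
      · exact absurd h1 h0
      · exact h1
      · exact ⟨k, hAk, hl k (hch z l (hz l) hk)⟩
    obtain ⟨i, hi, hx⟩ := key _ h
    obtain ⟨j, hj, hM⟩ := key _ hx
    exact (hF _).2 (Or.inl (Or.inr ⟨j, hj, (hF _).2 (Or.inl (Or.inr ⟨i, hi, hM⟩))⟩))
  · have hF' : ∀ x, F x ↔ ∃ l, B l ∧ ∀ i ∈ S l, x i := by
      intro x
      rw [hF]
      constructor
      · rintro ((h1 | ⟨i, hi, -⟩) | h1)
        · exact absurd h1 h0
        · exact absurd ⟨i, hi⟩ hex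
        · exact h1
      · exact Or.inr
    obtain ⟨l, hl, -⟩ := (hF' _).1 h
    obtain ⟨k, hk, hmin⟩ := WellFounded.has_min (wellFounded_lt (α := Fin r)) {l | B l} ⟨l, hl⟩
    have hF2 : ∀ x, F x ↔ ∀ i ∈ S k, x i := by
      intro x
      rw [hF']
      constructor
      · rintro ⟨m, hm, hx⟩ i hi
        exact hx i (hch k m (not_lt.1 (hmin m hm)) hi)
      · exact fun hx => ⟨k, hk, hx⟩
    simp only [hF2] at h ⊢
    exact fun j hj i hi => h i hi j hj

/-- Over a distributive lattice, every function in chain form is self-commuting. -/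
theorem selfCommuting_of_chainForm {L : Type*} [DistribLattice L] {n : ℕ}
    (f : (Fin n → L) → L) (hf : HasChainForm f) :
    SelfCommuting f := by
  obtain ⟨r, hr, S, a₀, a, b, hne, hch, -, -, -, hab, -, hA, hfx⟩ := hf
  have main : ∀ M : Fin n → Fin n → L,
      f (fun i => f (fun j => M i j)) ≤ f (fun j => f (fun i => M i j)) := by
    intro M
    apply le_of_preds
    intro P hsup hinf
    have hmono : ∀ x y, x ≤ y → P x → P y := by
      intro x y hxy hx
      rw [← sup_eq_right.2 hxy, hsup]
      exact Or.inl hx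
    let F : (Fin n → Prop) → Prop := fun x =>
      (P a₀ ∨ ∃ i, P (a i) ∧ x i) ∨ ∃ l, P (b l) ∧ ∀ i ∈ S l, x i
    have hPf : ∀ x, P (f x) ↔ F (fun i => P (x i)) := by
      intro x
      rw [hfx, pred_fold_sup P hsup, pred_fold_sup P hsup]
      simp only [hinf, pred_inf' P hinf, Finset.mem_univ, true_and, F]
    have hPff : ∀ M : Fin n → Fin n → L, P (f (fun i => f (fun j => M i j))) ↔
        F (fun i => F (fun j => P (M i j))) := by
      intro M
      rw [hPf]
      simp only [hPf]
    rw [hPff, hPff (fun j i => M i j)]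
    refine bool_chain S (P a₀) (fun i => P (a i)) (fun l => P (b l)) ⟨0, hr⟩
      (fun l => Nat.zero_le _) hch (fun i l hi => hmono _ _ (hab i l hi)) ?_ F
      (fun x => Iff.rfl) (fun i j => P (M i j))
    intro i hi
    by_cases his : i ∈ S ⟨0, hr⟩
    · exact ⟨i, his, hi⟩
    · obtain ⟨j, hj, hij⟩ := hA i his
      exact ⟨j, hj, hmono _ _ hij hi⟩
  intro M
  exact le_antisymm (main M) (main (fun i j => M j i))
end

section
/- Let L be a bounded chain and let f : L^3 → L be the ternary lattice polynomial function f(x_1, x_2, x_3) = a_∅ ∨ (a_1 ∧ x_1) ∨ (a_2 ∧ x_2) ∨ (a_3 ∧ x_3) ∨ (a_{12} ∧ x_1 ∧ x_2) ∨ (a_{13} ∧ x_1 ∧ x_3) ∨ (a_{23} ∧ x_2 ∧ x_3) ∨ (a_{123} ∧ x_1 ∧ x_2 ∧ x_3), where a_I ≤ a_J whenever I ⊆ J. If f is self-commuting, then for every choice of distinct indices i, j, k with {i, j, k} = {1, 2, 3}, one has a_{ij} ∧ a_{jk} ≤ a_i ∨ a_j ≤ a_{ij}. -/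
/-- Necessary inequalities for a ternary lattice polynomial on a bounded chain
to be self-commuting: for all distinct `i, j, k` with `{i,j,k} = {1,2,3}`,
`a_{ij} ∧ a_{jk} ≤ a_i ∨ a_j ≤ a_{ij}`. The six choices of `(i,j,k)` are
spelled out explicitly. -/
theorem ternary_selfCommuting_coeff_ineq {L : Type*} [LinearOrder L] [BoundedOrder L]
    (a₀ a₁ a₂ a₃ a₁₂ a₁₃ a₂₃ a₁₂₃ : L)
    -- `a_I ≤ a_J` whenever `I ⊆ J`
    (h₀₁ : a₀ ≤ a₁) (h₀₂ : a₀ ≤ a₂) (h₀₃ : a₀ ≤ a₃)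
    (h₁ : a₁ ≤ a₁₂) (h₁' : a₁ ≤ a₁₃)
    (h₂ : a₂ ≤ a₁₂) (h₂' : a₂ ≤ a₂₃)
    (h₃ : a₃ ≤ a₁₃) (h₃' : a₃ ≤ a₂₃)
    (h₁₂ : a₁₂ ≤ a₁₂₃) (h₁₃ : a₁₃ ≤ a₁₂₃) (h₂₃ : a₂₃ ≤ a₁₂₃)
    (f : (Fin 3 → L) → L)
    (hf : ∀ x : Fin 3 → L,
      f x = a₀ ⊔ (a₁ ⊓ x 0) ⊔ (a₂ ⊓ x 1) ⊔ (a₃ ⊓ x 2)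
        ⊔ (a₁₂ ⊓ x 0 ⊓ x 1) ⊔ (a₁₃ ⊓ x 0 ⊓ x 2) ⊔ (a₂₃ ⊓ x 1 ⊓ x 2)
        ⊔ (a₁₂₃ ⊓ x 0 ⊓ x 1 ⊓ x 2))
    (hsc : SelfCommuting f) :
    (a₁₂ ⊓ a₂₃ ≤ a₁ ⊔ a₂ ∧ a₁ ⊔ a₂ ≤ a₁₂) ∧
    (a₁₃ ⊓ a₂₃ ≤ a₁ ⊔ a₃ ∧ a₁ ⊔ a₃ ≤ a₁₃) ∧
    (a₁₂ ⊓ a₁₃ ≤ a₂ ⊔ a₁ ∧ a₂ ⊔ a₁ ≤ a₁₂) ∧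
    (a₂₃ ⊓ a₁₃ ≤ a₂ ⊔ a₃ ∧ a₂ ⊔ a₃ ≤ a₂₃) ∧
    (a₁₃ ⊓ a₁₂ ≤ a₃ ⊔ a₁ ∧ a₃ ⊔ a₁ ≤ a₁₃) ∧
    (a₂₃ ⊓ a₁₂ ≤ a₃ ⊔ a₂ ∧ a₃ ⊔ a₂ ≤ a₂₃) := by
  obtain ⟨F, hF⟩ : ∃ F : L → L → L → L, ∀ x y z, F x y z =
      a₀ ⊔ (a₁ ⊓ x) ⊔ (a₂ ⊓ y) ⊔ (a₃ ⊓ z)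
        ⊔ (a₁₂ ⊓ x ⊓ y) ⊔ (a₁₃ ⊓ x ⊓ z) ⊔ (a₂₃ ⊓ y ⊓ z)
        ⊔ (a₁₂₃ ⊓ x ⊓ y ⊓ z) := ⟨_, fun _ _ _ => rfl⟩
  have hfF : ∀ x, f x = F (x 0) (x 1) (x 2) := fun x => by rw [hf, hF]
  have e : ∀ p q r s t u v w x : L,
      F (F p q r) (F s t u) (F v w x) = F (F p s v) (F q t w) (F r u x) := by
    intro p q r s t u v w x
    have h := hsc ![![p, q, r], ![s, t, u], ![v, w, x]]
    simp only [hfF] at h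
    exact h
  have v0 : F ⊥ ⊥ ⊥ = a₀ := by rw [hF]; simp
  have v1 : F ⊤ ⊥ ⊥ = a₁ := by rw [hF]; simp [h₀₁]
  have v2 : F ⊥ ⊤ ⊥ = a₂ := by rw [hF]; simp [h₀₂]
  have v3 : F ⊥ ⊥ ⊤ = a₃ := by rw [hF]; simp [h₀₃]
  have v12 : F ⊤ ⊤ ⊥ = a₁₂ := by rw [hF]; simp [h₀₁.trans h₁, h₁, h₂]
  have v13 : F ⊤ ⊥ ⊤ = a₁₃ := by rw [hF]; simp [h₀₁.trans h₁', h₁', h₃]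
  have v23 : F ⊥ ⊤ ⊤ = a₂₃ := by rw [hF]; simp [h₀₂.trans h₂', h₂', h₃']
  have l12 : ∀ x y z, a₁₂ ⊓ x ⊓ y ≤ F x y z := by
    intro x y z; rw [hF]; simp only [le_sup_iff, le_refl, true_or, or_true]
  have l13 : ∀ x y z, a₁₃ ⊓ x ⊓ z ≤ F x y z := by
    intro x y z; rw [hF]; simp only [le_sup_iff, le_refl, true_or, or_true]
  have l23 : ∀ x y z, a₂₃ ⊓ y ⊓ z ≤ F x y z := by
    intro x y z; rw [hF]; simp only [le_sup_iff, le_refl, true_or, or_true]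
  refine ⟨⟨?_, sup_le h₁ h₂⟩, ⟨?_, sup_le h₁' h₃⟩, ⟨?_, sup_le h₂ h₁⟩, ⟨?_, sup_le h₂' h₃'⟩,
    ⟨?_, sup_le h₃ h₁'⟩, ⟨?_, sup_le h₃' h₂'⟩⟩
  · have h := e ⊤ ⊤ ⊥ ⊥ ⊤ ⊤ ⊥ ⊥ ⊥
    simp only [v0, v1, v2, v3, v12, v13, v23] at h
    have hl := l12 a₁₂ a₂₃ a₀
    rw [h, hF] at hl
    have hl' : a₁₂ ⊓ a₂₃ ≤ _ := le_trans (by simp) hl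
    refine hl'.trans ?_
    simp only [sup_le_iff]
    simp only [le_sup_iff, inf_le_iff, le_refl, true_or, or_true, and_self,
      h₀₁, h₀₂, h₀₃]
  · have h := e ⊤ ⊥ ⊤ ⊥ ⊥ ⊥ ⊥ ⊤ ⊤
    simp only [v0, v1, v2, v3, v12, v13, v23] at h
    have hl := l13 a₁₃ a₀ a₂₃
    rw [h, hF] at hl
    have hl' : a₁₃ ⊓ a₂₃ ≤ _ := le_trans (by simp) hl
    refine hl'.trans ?_
    simp only [sup_le_iff]
    simp only [le_sup_iff, inf_le_iff, le_refl, true_or, or_true, and_self,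
      h₀₁, h₀₂, h₀₃]
  · have h := e ⊤ ⊥ ⊤ ⊤ ⊤ ⊥ ⊥ ⊥ ⊥
    simp only [v0, v1, v2, v3, v12, v13, v23] at h
    have hl := l12 a₁₃ a₁₂ a₀
    rw [h, hF] at hl
    have hl' : a₁₂ ⊓ a₁₃ ≤ _ := le_trans (by simp) hl
    refine hl'.trans ?_
    simp only [sup_le_iff]
    simp only [le_sup_iff, inf_le_iff, le_refl, true_or, or_true, and_self,
      h₀₁, h₀₂, h₀₃]
  · have h := e ⊥ ⊥ ⊥ ⊥ ⊤ ⊤ ⊤ ⊥ ⊤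
    simp only [v0, v1, v2, v3, v12, v13, v23] at h
    have hl := l23 a₀ a₂₃ a₁₃
    rw [h, hF] at hl
    have hl' : a₂₃ ⊓ a₁₃ ≤ _ := le_trans (by simp) hl
    refine hl'.trans ?_
    simp only [sup_le_iff]
    simp only [le_sup_iff, inf_le_iff, le_refl, true_or, or_true, and_self,
      h₀₁, h₀₂, h₀₃]
  · have h := e ⊤ ⊤ ⊥ ⊥ ⊥ ⊥ ⊤ ⊥ ⊤
    simp only [v0, v1, v2, v3, v12, v13, v23] at h
    have hl := l13 a₁₂ a₀ a₁₃
    rw [h, hF] at hl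
    have hl' : a₁₃ ⊓ a₁₂ ≤ _ := le_trans (by simp) hl
    refine hl'.trans ?_
    simp only [sup_le_iff]
    simp only [le_sup_iff, inf_le_iff, le_refl, true_or, or_true, and_self,
      h₀₁, h₀₂, h₀₃]
  · have h := e ⊥ ⊥ ⊥ ⊤ ⊤ ⊥ ⊥ ⊤ ⊤
    simp only [v0, v1, v2, v3, v12, v13, v23] at h
    have hl := l23 a₀ a₁₂ a₂₃
    rw [h, hF] at hl
    have hl' : a₂₃ ⊓ a₁₂ ≤ _ := le_trans (by simp) hl
    refine hl'.trans ?_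
    simp only [sup_le_iff]
    simp only [le_sup_iff, inf_le_iff, le_refl, true_or, or_true, and_self,
      h₀₁, h₀₂, h₀₃]
end

section
/- Let L be a distributive lattice and let f : L^n → L have chain form, i.e., f(x_1,…,x_n) = a_∅ ∨ ⋁_{i ∈ [n]} (a_i ∧ x_i) ∨ ⋁_{1 ≤ ℓ ≤ r} (a_{S_ℓ} ∧ ⋀_{i ∈ S_ℓ} x_i) for a chain of subsets S_1 ⊆ S_2 ⊆ ⋯ ⊆ S_r ⊆ [n] with r ≥ 1 and |S_1| ≥ 2, and elements a_∅, a_i (i ∈ [n]), a_{S_ℓ} (1 ≤ ℓ ≤ r) of L such that a_I ≤ a_J whenever I ⊆ J (among the indexed sets), and for all i ∉ S_1 there exists j ∈ S_1 with a_i ≤ a_j. Then for every matrix (x_{ij}) of elements of L (i, j ∈ [n]), f(f(x_{11},…,x_{1n}), f(x_{21},…,x_{2n}), …, f(x_{n1},…,x_{nn})) = a_∅ ∨ ⋁_{i ∈ [n]} ⋁_{j ∈ [n]} (a_i ∧ a_j ∧ x_{ij}) ∨ ⋁_{1 ≤ ℓ ≤ r} (a_{S_ℓ} ∧ ⋀_{i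 ∈ S_ℓ} ⋀_{j ∈ S_ℓ} x_{ij}). -/
theorem sep_hom {L : Type*} [DistribLattice L] {x y : L}
    (h : ∀ P : L → Prop, (∀ u v, P (u ⊔ v) ↔ P u ∨ P v) → (∀ u v, P (u ⊓ v) ↔ P u ∧ P v) →
      P x → P y) : x ≤ y := by
  by_contra hxy
  have hd : Disjoint ((Order.PFilter.principal x : Order.PFilter L) : Set L)
      ((Order.Ideal.principal y : Order.Ideal L) : Set L) := by
    rw [Set.disjoint_left]
    intro z hz hz'
    exact hxy (le_trans (Order.PFilter.mem_principal.1 hz) (Order.Ideal.mem_principal.1 hz'))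
  obtain ⟨J, hJ, hyJ, hdJ⟩ := DistribLattice.prime_ideal_of_disjoint_filter_ideal hd
  refine h (fun z => z ∉ J) ?_ ?_ ?_ ?_
  · intro u v
    rw [Order.Ideal.sup_mem_iff]
    tauto
  · intro u v
    constructor
    · intro huv
      exact ⟨fun hu => huv (J.lower inf_le_left hu), fun hv => huv (J.lower inf_le_right hv)⟩
    · rintro ⟨hu, hv⟩ huv
      exact (hJ.mem_or_mem huv).elim hu hv
  · exact fun hx => Set.disjoint_left.1 hdJ (Order.PFilter.mem_principal.2 le_rfl) hx
  · exact hyJ (Order.Ideal.mem_principal.2 le_rfl)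

theorem hom_fold {L ι : Type*} [DistribLattice L] {P : L → Prop}
    (hs : ∀ u v, P (u ⊔ v) ↔ P u ∨ P v) (c : L) (g : ι → L) (s : Finset ι) :
    P (s.fold (fun u v : L => u ⊔ v) c g) ↔ P c ∨ ∃ i ∈ s, P (g i) := by
  classical
  induction s using Finset.induction_on with
  | empty => simp
  | insert i s hi ih =>
    rw [Finset.fold_insert hi, hs, ih]
    simp only [Finset.mem_insert, exists_eq_or_imp]
    tauto

theorem hom_inf {L ι : Type*} [DistribLattice L] {P : L → Prop}
    (hi : ∀ u v, P (u ⊓ v) ↔ P u ∧ P v) (g : ι → L) (s : Finset ι) (h : s.Nonempty) :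
    P (s.inf' h g) ↔ ∀ i ∈ s, P (g i) := by
  classical
  induction h using Finset.Nonempty.cons_induction with
  | singleton i => simp
  | cons i s his hs ih =>
    rw [Finset.inf'_cons hs, hi, ih]
    simp

/-- For a function in chain form
`f(x) = a_∅ ∨ ⋁_{i ∈ [n]} (a_i ∧ x_i) ∨ ⋁_{1 ≤ ℓ ≤ r} (a_{S_ℓ} ∧ ⋀_{i ∈ S_ℓ} x_i)`
over a distributive lattice, the double application over a matrix `X`
evaluates to
`a_∅ ∨ ⋁_i ⋁_j (a_i ∧ a_j ∧ X_{ij}) ∨ ⋁_ℓ (a_{S_ℓ} ∧ ⋀_{i ∈ S_ℓ} ⋀_{j ∈ S_ℓ} X_{ij})`. -/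
theorem chainForm_double_apply {L : Type*} [DistribLattice L] {n : ℕ}
    (r : ℕ) (hr : 0 < r) (S : Fin r → Finset (Fin n)) (a₀ : L) (a : Fin n → L)
    (b : Fin r → L) (hne : ∀ ℓ : Fin r, (S ℓ).Nonempty)
    (hchain : ∀ ℓ m : Fin r, ℓ ≤ m → S ℓ ⊆ S m)
    (hcard : 2 ≤ (S ⟨0, hr⟩).card)
    (h₀ : ∀ i, a₀ ≤ a i)
    (h₀' : ∀ ℓ, a₀ ≤ b ℓ)
    (hab : ∀ i ℓ, i ∈ S ℓ → a i ≤ b ℓ)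
    (hbb : ∀ ℓ m, S ℓ ⊆ S m → b ℓ ≤ b m)
    (hS₁ : ∀ i, i ∉ S ⟨0, hr⟩ → ∃ j ∈ S ⟨0, hr⟩, a i ≤ a j)
    (f : (Fin n → L) → L)
    (hf : ∀ x : Fin n → L,
      f x = Finset.univ.fold (fun u v : L => u ⊔ v)
        (Finset.univ.fold (fun u v : L => u ⊔ v) a₀ (fun i => a i ⊓ x i))
        (fun ℓ : Fin r => b ℓ ⊓ (S ℓ).inf' (hne ℓ) (fun i => x i))) :
    ∀ X : Fin n → Fin n → L,
      f (fun i => f (fun j => X i j)) =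
        Finset.univ.fold (fun u v : L => u ⊔ v)
          (Finset.univ.fold (fun u v : L => u ⊔ v) a₀
            (fun p : Fin n × Fin n => a p.1 ⊓ a p.2 ⊓ X p.1 p.2))
          (fun ℓ : Fin r => b ℓ ⊓
            (S ℓ ×ˢ S ℓ).inf' ((hne ℓ).product (hne ℓ)) (fun p => X p.1 p.2)) := by
  intro X
  have key : ∀ P : L → Prop, (∀ u v, P (u ⊔ v) ↔ P u ∨ P v) →
      (∀ u v, P (u ⊓ v) ↔ P u ∧ P v) →
      (P (f (fun i => f (fun j => X i j))) ↔
        P (Finset.univ.fold (fun u v : L => u ⊔ v)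
          (Finset.univ.fold (fun u v : L => u ⊔ v) a₀
            (fun p : Fin n × Fin n => a p.1 ⊓ a p.2 ⊓ X p.1 p.2))
          (fun ℓ : Fin r => b ℓ ⊓
            (S ℓ ×ˢ S ℓ).inf' ((hne ℓ).product (hne ℓ)) (fun p => X p.1 p.2)))) := by
    intro P hs hi
    have mono : ∀ u v, u ≤ v → P u → P v := by
      intro u v huv hu
      rw [← sup_eq_right.2 huv, hs]
      exact Or.inl hu
    have hF : ∀ x, P (f x) ↔ (P a₀ ∨ ∃ i, P (a i) ∧ P (x i)) ∨
        ∃ ℓ, P (b ℓ) ∧ ∀ i ∈ S ℓ, P (x i) := by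
      intro x
      rw [hf, hom_fold hs, hom_fold hs]
      simp only [hi, hom_inf hi, Finset.mem_univ, true_and]
    rw [hom_fold hs, hom_fold hs]
    simp only [hi, hom_inf hi, Finset.mem_univ, true_and, Finset.mem_product, Prod.exists,
      Prod.forall]
    by_cases h0 : P a₀
    · rw [hF]
      simp [h0]
    by_cases hA : ∃ i, P (a i)
    · obtain ⟨j, hjS, hj⟩ : ∃ j ∈ S ⟨0, hr⟩, P (a j) := by
        obtain ⟨i, hiA⟩ := hA
        by_cases hiS : i ∈ S ⟨0, hr⟩
        · exact ⟨i, hiS, hiA⟩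
        · obtain ⟨j, hjS, hij⟩ := hS₁ i hiS
          exact ⟨j, hjS, mono _ _ hij hiA⟩
      have hjl : ∀ ℓ, j ∈ S ℓ := fun ℓ => hchain ⟨0, hr⟩ ℓ (Nat.zero_le _) hjS
      have hF' : ∀ x, P (f x) ↔ ∃ i, P (a i) ∧ P (x i) := by
        intro x
        rw [hF]
        constructor
        · rintro ((h | h) | ⟨ℓ, -, h⟩)
          · exact absurd h h0
          · exact h
          · exact ⟨j, hj, h j (hjl ℓ)⟩
        · exact fun h => Or.inl (Or.inr h)
      simp only [hF']
      constructor
      · rintro ⟨i, h1, k, h2, h3⟩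
        exact Or.inl (Or.inr ⟨i, k, ⟨h1, h2⟩, h3⟩)
      · rintro ((h | ⟨i, k, ⟨h1, h2⟩, h3⟩) | ⟨ℓ, -, h⟩)
        · exact absurd h h0
        · exact ⟨i, h1, k, h2, h3⟩
        · exact ⟨j, hj, j, hj, h j j ⟨hjl ℓ, hjl ℓ⟩⟩
    · have hA' : ∀ i, ¬ P (a i) := fun i h => hA ⟨i, h⟩
      simp only [hF, h0, hA', false_and, exists_false, false_or]
      constructor
      · rintro ⟨ℓ, hb, h⟩
        by_cases hmin : ∃ m, P (b m) ∧ ∀ k, P (b k) → m ≤ k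
        · obtain ⟨m, hm, hmk⟩ := hmin
          refine ⟨m, hm, ?_⟩
          rintro i k ⟨hi1, hk1⟩
          obtain ⟨q, hq, h'⟩ := h i (hchain m ℓ (hmk ℓ hb) hi1)
          exact h' k (hchain m q (hmk q hq) hk1)
        · exfalso
          apply hmin
          obtain ⟨m, hm, hmk⟩ := WellFounded.has_min (wellFounded_lt (α := Fin r))
            {k | P (b k)} ⟨ℓ, hb⟩
          exact ⟨m, hm, fun k hk => not_lt.1 (hmk k hk)⟩
      · rintro ⟨ℓ, hb, h⟩
        exact ⟨ℓ, hb, fun i hi1 => ⟨ℓ, hb, fun k hk => h i k ⟨hi1, hk⟩⟩⟩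
  exact le_antisymm (sep_hom fun P hs hi => (key P hs hi).1)
    (sep_hom fun P hs hi => (key P hs hi).2)
end

section
/- Let L be a bounded chain. Every lattice polynomial function f : L^n → L with n = 1 or n = 2 is a weighted disjunction or has chain form. -/
theorem latticePolynomial_one {L : Type*} [LinearOrder L] [BoundedOrder L]
    (f : (Fin 1 → L) → L) (hf : IsLatticePolynomial f) :
    ∃ a₀ a : L, a₀ ≤ a ∧ ∀ x, f x = a₀ ⊔ (a ⊓ x 0) := by
  induction hf with
  | proj i =>
    refine ⟨⊥, ⊤, bot_le, fun x => ?_⟩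
    fin_cases i
    simp
  | const c => exact ⟨c, c, le_rfl, fun x => by simp⟩
  | sup _ _ ih₁ ih₂ =>
    obtain ⟨p, q, h, e⟩ := ih₁
    obtain ⟨p', q', h', e'⟩ := ih₂
    refine ⟨p ⊔ p', q ⊔ q', sup_le_sup h h', fun x => ?_⟩
    beta_reduce
    rw [e, e']
    refine eq_of_forall_le_iff fun t => ?_
    simp only [le_sup_iff, le_inf_iff]
    tauto
  | inf _ _ ih₁ ih₂ =>
    obtain ⟨p, q, h, e⟩ := ih₁
    obtain ⟨p', q', h', e'⟩ := ih₂
    refine ⟨p ⊓ p', q ⊓ q', inf_le_inf h h', fun x => ?_⟩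
    beta_reduce
    rw [e, e']
    refine eq_of_forall_le_iff fun t => ?_
    have h1 : t ≤ p → t ≤ q := fun k => k.trans h
    have h2 : t ≤ p' → t ≤ q' := fun k => k.trans h'
    simp only [le_sup_iff, le_inf_iff]
    tauto

theorem latticePolynomial_two {L : Type*} [LinearOrder L] [BoundedOrder L]
    (f : (Fin 2 → L) → L) (hf : IsLatticePolynomial f) :
    ∃ a₀ a b c : L, a₀ ≤ a ∧ a₀ ≤ b ∧ a ≤ c ∧ b ≤ c ∧
      ∀ x, f x = a₀ ⊔ (a ⊓ x 0) ⊔ (b ⊓ x 1) ⊔ (c ⊓ (x 0 ⊓ x 1)) := by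
  induction hf with
  | proj i =>
    fin_cases i
    · refine ⟨⊥, ⊤, ⊥, ⊤, bot_le, bot_le, le_top, le_top, fun x => ?_⟩
      simp
    · refine ⟨⊥, ⊥, ⊤, ⊤, bot_le, bot_le, le_top, le_top, fun x => ?_⟩
      simp
  | const c =>
    refine ⟨c, c, c, c, le_rfl, le_rfl, le_rfl, le_rfl, fun x => by simp⟩
  | sup _ _ ih₁ ih₂ =>
    obtain ⟨p, q, r, s, h1, h2, h3, h4, e⟩ := ih₁
    obtain ⟨p', q', r', s', h1', h2', h3', h4', e'⟩ := ih₂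
    refine ⟨p ⊔ p', q ⊔ q', r ⊔ r', s ⊔ s', sup_le_sup h1 h1', sup_le_sup h2 h2',
      sup_le_sup h3 h3', sup_le_sup h4 h4', fun x => ?_⟩
    beta_reduce
    rw [e, e']
    refine eq_of_forall_le_iff fun t => ?_
    simp only [le_sup_iff, le_inf_iff]
    grind only
  | inf _ _ ih₁ ih₂ =>
    obtain ⟨p, q, r, s, h1, h2, h3, h4, e⟩ := ih₁
    obtain ⟨p', q', r', s', h1', h2', h3', h4', e'⟩ := ih₂
    refine ⟨p ⊓ p', q ⊓ q', r ⊓ r', s ⊓ s', inf_le_inf h1 h1', inf_le_inf h2 h2',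
      inf_le_inf h3 h3', inf_le_inf h4 h4', fun x => ?_⟩
    beta_reduce
    rw [e, e']
    refine eq_of_forall_le_iff fun t => ?_
    simp only [le_sup_iff, le_inf_iff]
    have k1 : t ≤ p → t ≤ q := fun k => k.trans h1
    have k2 : t ≤ p → t ≤ r := fun k => k.trans h2
    have k3 : t ≤ q → t ≤ s := fun k => k.trans h3
    have k4 : t ≤ r → t ≤ s := fun k => k.trans h4
    have k1' : t ≤ p' → t ≤ q' := fun k => k.trans h1'
    have k2' : t ≤ p' → t ≤ r' := fun k => k.trans h2'
    have k3' : t ≤ q' → t ≤ s' := fun k => k.trans h3'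
    have k4' : t ≤ r' → t ≤ s' := fun k => k.trans h4'
    clear h1 h2 h3 h4 h1' h2' h3' h4'
    grind only

/-- Over a bounded chain, every unary or binary lattice polynomial function is
a weighted disjunction or has chain form. -/
theorem weightedDisjunction_or_chainForm_of_arity_le_two
    {L : Type*} [LinearOrder L] [BoundedOrder L] {n : ℕ}
    (hn : n = 1 ∨ n = 2) (f : (Fin n → L) → L) (hf : IsLatticePolynomial f) :
    IsWeightedDisjunction f ∨ HasChainForm f := by
  rcases hn with rfl | rfl
  · left
    obtain ⟨p, q, _, e⟩ := latticePolynomial_one f hf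
    refine ⟨p, fun _ => q, fun x => ?_⟩
    rw [e]
    simp [Finset.univ_unique, Finset.fold_singleton, sup_comm]
  · right
    obtain ⟨p, q, r, s, h1, h2, h3, h4, e⟩ := latticePolynomial_two f hf
    refine ⟨1, one_pos, fun _ => Finset.univ, p, ![q, r], fun _ => s,
      fun _ => Finset.univ_nonempty, fun _ _ _ => Finset.Subset.refl _, by simp, ?_,
      fun _ => h1.trans h3, ?_, fun _ _ _ => le_rfl, fun i hi => absurd (Finset.mem_univ i) hi,
      fun x => ?_⟩
    · intro i
      fin_cases i
      · exact h1
      · exact h2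
    · intro i _ _
      fin_cases i
      · exact h3
      · exact h4
    · have hx : (Finset.univ : Finset (Fin 2)).inf' Finset.univ_nonempty (fun i => x i)
          = x 0 ⊓ x 1 := by
        refine eq_of_forall_le_iff fun t => ?_
        simp [Fin.forall_fin_two]
      have hu : (Finset.univ : Finset (Fin 2)) = insert 0 {1} := by decide
      have hfold : Finset.univ.fold (fun u v : L => u ⊔ v) p (fun i => ![q, r] i ⊓ x i)
          = (q ⊓ x 0) ⊔ ((r ⊓ x 1) ⊔ p) := by
        rw [hu, Finset.fold_insert (by decide), Finset.fold_singleton]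
        rfl
      beta_reduce
      rw [e, hfold, hx, Finset.univ_unique, Finset.fold_singleton]
      ac_rfl
end
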